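/- A countable union of charming subspaces is charming: if X is a topological space and X = ⋃_{k∈ℕ} X_k where each X_k ⊆ X is a charming space in the subspace topology, then X is a charming space. -/

import Mathlib

open Set Function TopologicalSpace

universe u

/-- A map between topological spaces is *perfect* if it is continuous, closed, and
every fiber is compact. -/
def PerfectMap {Y : Type*} {Z : Type*} [TopologicalSpace Y] [TopologicalSpace Z]
    (f : Y → Z) : Prop :=
  Continuous f ∧ IsClosedMap f ∧ ∀ z : Z, IsCompact (f ⁻¹' {z})

/-- A topological space `X` is a *Lindelöf Σ-space* if there exist a topological space `Y`,
a continuous surjection from `Y` onto `X`, and a perfect surjection from `Y` onto some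
second-countable space. -/
def IsLindelofSigma (X : Type u) [TopologicalSpace X] : Prop :=
  ∃ (Y : Type u) (tY : TopologicalSpace Y) (Z : Type u) (tZ : TopologicalSpace Z),
    @SecondCountableTopology Z tZ ∧
    (∃ f : Y → X, @Continuous Y X tY _ f ∧ Surjective f) ∧
    (∃ g : Y → Z, @PerfectMap Y Z tY tZ g ∧ Surjective g)

/-- A topological space `X` is a *charming space* if there is a subset `Y` of `X` that is a
Lindelöf Σ-space in the subspace topology and such that for every open `U ⊇ Y`,
the set `X \ U` is a Lindelöf Σ-space in the subspace topology. -/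
def IsCharming (X : Type u) [TopologicalSpace X] : Prop :=
  ∃ Y : Set X, IsLindelofSigma Y ∧
    ∀ U : Set X, IsOpen U → Y ⊆ U → IsLindelofSigma ↥(Uᶜ)

/-- A *CL-charming* space: the shell `Y` can be chosen closed. -/
def IsCLCharming (X : Type u) [TopologicalSpace X] : Prop :=
  ∃ Y : Set X, IsClosed Y ∧ IsLindelofSigma Y ∧
    ∀ U : Set X, IsOpen U → Y ⊆ U → IsLindelofSigma ↥(Uᶜ)

/-- A *CO-charming* space: the shell `Y` can be chosen compact. -/
def IsCOCharming (X : Type u) [TopologicalSpace X] : Prop :=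
  ∃ Y : Set X, IsCompact Y ∧ IsLindelofSigma Y ∧
    ∀ U : Set X, IsOpen U → Y ⊆ U → IsLindelofSigma ↥(Uᶜ)

/-- A space has a *countable network* if there is a countable family `N` of subsets such that
every point in every open set `V` is contained in a member of `N` contained in `V`. -/
def HasCountableNetwork (X : Type u) [TopologicalSpace X] : Prop :=
  ∃ N : Set (Set X), N.Countable ∧
    ∀ x : X, ∀ V : Set X, IsOpen V → x ∈ V → ∃ n ∈ N, x ∈ n ∧ n ⊆ V

/-- A topological space `X` is *weak (4,4)-structured* if there exist a topological space `Y`,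
a continuous surjection from `Y` onto `X`, and a perfect surjection from `Y` onto some
charming space. -/
def IsWeak44Structured (X : Type u) [TopologicalSpace X] : Prop :=
  ∃ (Y : Type u) (tY : TopologicalSpace Y) (M : Type u) (tM : TopologicalSpace M),
    @IsCharming M tM ∧
    (∃ f : Y → X, @Continuous Y X tY _ f ∧ Surjective f) ∧
    (∃ g : Y → M, @PerfectMap Y M tY tM g ∧ Surjective g)

/-!
If `X` is covered by continuous images `f i (S i)` of charming spaces with shells `Y i`, the union
`⋃ i, f i (Y i)` is a shell for `X`: when an open set `U` contains it, `f i ⁻¹' U` is an open set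
containing `Y i`, and `Uᶜ` is the union of the images of the Lindelöf Σ-spaces `(f i ⁻¹' U)ᶜ`. So
everything reduces to the stability of Lindelöf Σ-spaces under continuous images and countable
unions, and the latter to countable disjoint sums, where the witnesses can be summed.
-/

theorem preimage_sigmaMk_image_sigmaMap_id {ι : Type*} {Y Z : ι → Type*} (g : ∀ i, Y i → Z i)
    (C : Set (Σ i, Y i)) (i : ι) :
    Sigma.mk i ⁻¹' (Sigma.map id g '' C) = g i '' (Sigma.mk i ⁻¹' C) := by
  ext z
  constructor
  · rintro ⟨⟨j, y⟩, hy, ⟨⟩⟩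
    exact ⟨y, hy, rfl⟩
  · rintro ⟨y, hy, rfl⟩
    exact ⟨⟨i, y⟩, hy, rfl⟩

theorem PerfectMap.sigmaMap {ι : Type*} {Y Z : ι → Type*} [∀ i, TopologicalSpace (Y i)]
    [∀ i, TopologicalSpace (Z i)] {g : ∀ i, Y i → Z i} (hg : ∀ i, PerfectMap (g i)) :
    PerfectMap (Sigma.map id g) := by
  refine ⟨Continuous.sigma_map fun i => (hg i).1, fun C hC => ?_, fun ⟨i, z⟩ => ?_⟩
  · refine isClosed_sigma_iff.2 fun i => ?_
    rw [preimage_sigmaMk_image_sigmaMap_id]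
    exact (hg i).2.1 _ (isClosed_sigma_iff.1 hC i)
  · have hfiber : Sigma.mk i '' (g i ⁻¹' {z}) = Sigma.map id g ⁻¹' {⟨i, z⟩} := by
      rw [← image_singleton]
      exact image_sigmaMk_preimage_sigmaMap injective_id g i {z}
    exact hfiber ▸ ((hg i).2.2 z).image continuous_sigmaMk

namespace IsLindelofSigma

theorem of_surjective {S X : Type u} [TopologicalSpace S] [TopologicalSpace X]
    (hS : IsLindelofSigma S) {f : S → X} (hf : Continuous f) (hfs : Surjective f) :
    IsLindelofSigma X := by
  obtain ⟨Y, tY, Z, tZ, hZ, ⟨p, hp, hps⟩, hg⟩ := hS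
  exact ⟨Y, tY, Z, tZ, hZ, ⟨f ∘ p, hf.comp hp, hfs.comp hps⟩, hg⟩

theorem sigma {ι : Type*} [Countable ι] {S : ι → Type*} [∀ i, TopologicalSpace (S i)]
    (hS : ∀ i, IsLindelofSigma (S i)) : IsLindelofSigma (Σ i, S i) := by
  choose Y tY Z tZ hZ hpS hgZ using hS
  choose p hp hps using hpS
  choose g hg hgs using hgZ
  exact ⟨Σ i, Y i, inferInstance, Σ i, Z i, inferInstance, inferInstance,
    ⟨Sigma.map id p, Continuous.sigma_map hp, surjective_id.sigma_map hps⟩,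
    ⟨Sigma.map id g, PerfectMap.sigmaMap hg, surjective_id.sigma_map hgs⟩⟩

variable {X : Type u} [TopologicalSpace X]

theorem image {S : Type u} [TopologicalSpace S] {s : Set S} (hs : IsLindelofSigma s)
    {f : S → X} (hf : ContinuousOn f s) : IsLindelofSigma (f '' s) :=
  hs.of_surjective (hf.domRestrict.subtype_mk fun x => mem_image_of_mem f x.2)
    imageFactorization_surjective

theorem iUnion {ι : Type*} [Countable ι] {s : ι → Set X} (hs : ∀ i, IsLindelofSigma (s i)) :
    IsLindelofSigma (⋃ i, s i) := by
  -- Indexing by a type in universe `0` keeps the disjoint sum in the universe of `X`.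
  let e : Shrink.{0} ι ≃ ι := (equivShrink.{0} ι).symm
  have : Countable (Shrink.{0} ι) := Countable.of_equiv _ e.symm
  rw [← e.surjective.iUnion_comp]
  have hcont : Continuous (sigmaToiUnion fun j => s (e j)) :=
    continuous_sigma fun j => continuous_inclusion (subset_iUnion (fun j => s (e j)) j)
  exact (sigma fun j => hs (e j)).of_surjective hcont (sigmaToiUnion_surjective _)

end IsLindelofSigma

theorem countable_union_of_charming_general {X : Type u} [TopologicalSpace X] {ι : Type*}
    [Countable ι] {S : ι → Type u} [∀ i, TopologicalSpace (S i)] {f : ∀ i, S i → X}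
    (hf : ∀ i, Continuous (f i)) (hcover : ⋃ i, range (f i) = univ)
    (hS : ∀ i, IsCharming (S i)) : IsCharming X := by
  choose Y hY hYU using hS
  refine ⟨⋃ i, f i '' Y i, .iUnion fun i => (hY i).image (hf i).continuousOn, fun U hU hshell => ?_⟩
  have hcompl : Uᶜ = ⋃ i, f i '' (f i ⁻¹' U)ᶜ := by
    simp_rw [← preimage_compl, image_preimage_eq_inter_range, ← inter_iUnion, hcover, inter_univ]
  have hsub (i : ι) : Y i ⊆ f i ⁻¹' U := image_subset_iff.1 (iUnion_subset_iff.1 hshell i)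
  rw [hcompl]
  exact .iUnion fun i => (hYU i _ (hU.preimage (hf i)) (hsub i)).image (hf i).continuousOn

/-- A countable union of charming subspaces is charming. -/
theorem countable_union_of_charming {X : Type u} [TopologicalSpace X] [T35Space X]
    (Xk : ℕ → Set X) (hcover : (⋃ k, Xk k) = Set.univ)
    (hch : ∀ k : ℕ, IsCharming ↥(Xk k)) :
    IsCharming X := by
  exact countable_union_of_charming_general (fun _ => continuous_subtype_val)
    (by simpa only [Subtype.range_coe] using hcover) hch
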